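/- Assume 𝕜 contains ℚ. Let G^{(1)}, H^{(1)} ⊆ GL^{(1)}_𝕜(M) be subgroups and T_G, T_H ⊆ End^{(1)}_𝕜(M) be 𝕜-submodules. Assume the 'truncated exponential/logarithm' correspondences hold for both pairs, namely: (a) for every z ∈ M, every ξ ∈ T_G with ord(ξz) < ∞, and every integer N ≥ ord(ξz), there exists g ∈ G^{(1)} with g − Σ_{j=0}^{N} ξ^j/j! ∈ End^{(N+1)}_𝕜(M); (b) for every z ∈ M, every g ∈ G^{(1)} with ord((g−1)z) < ∞, and every integer N ≥ ord((g−1)z), there exists ξ ∈ T_G with ξ − Σ_{j=1}^{N} (−1)^{j+1}(g−1)^j/j ∈ End^{(N+1)}_𝕜(M); and the analogous conditions (a),(b) for the pair (T_H, H^{(1)}). Assume further that the subgroup generated by G^{(1)} ∪ H^{(1)} equals G^{(1)}·H^{(1)} := {g·h : g ∈ G^{(1)}, h ∈ H^{(1)}} and that [T_G, T_H] ⊆ T_H, where [ξ,η] := ξ∘η − η∘ξ. Then the pair (T_G + T_H, G^{(1)}·H^{(1)}) is pointwise of Lie type for the index 1. -/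

import Mathlib

variable {𝕜 M : Type*} [CommRing 𝕜] [Algebra ℚ 𝕜] [AddCommGroup M] [Module 𝕜 M]

/-- `End^{(i)}` : the 𝕜-submodule of endomorphisms shifting the filtration by `i`. -/
def EndS (Mf : ℕ → Submodule 𝕜 M) (i : ℕ) : Submodule 𝕜 (Module.End 𝕜 M) where
  carrier := {φ | ∀ j : ℕ, ∀ x ∈ Mf j, φ x ∈ Mf (j + i)}
  add_mem' := by
    intro a b ha hb j x hx
    simpa [LinearMap.add_apply] using add_mem (ha j x hx) (hb j x hx)
  zero_mem' := by
    intro j x hx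
    simpa using (Mf (j + i)).zero_mem
  smul_mem' := by
    intro c a ha j x hx
    simpa [LinearMap.smul_apply] using Submodule.smul_mem _ c (ha j x hx)

/-- `GL^{(i)}` (for `i ≥ 1`). -/
def GLFil (Mf : ℕ → Submodule 𝕜 M) (i : ℕ) : Set (Module.End 𝕜 M)ˣ :=
  {u | (∀ j : ℕ, ∀ x ∈ Mf j, (u : Module.End 𝕜 M) x ∈ Mf j) ∧
    (∀ j : ℕ, ∀ x ∈ Mf j, ((u⁻¹ : (Module.End 𝕜 M)ˣ) : Module.End 𝕜 M) x ∈ Mf j) ∧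
    ((u : Module.End 𝕜 M) - 1) ∈ EndS Mf i ∧
    (((u⁻¹ : (Module.End 𝕜 M)ˣ) : Module.End 𝕜 M) - 1) ∈ EndS Mf i}

/-- `ord(z) = sup {j : z ∈ M_j} ∈ ℕ ∪ {∞}`. -/
noncomputable def ordM (Mf : ℕ → Submodule 𝕜 M) (z : M) : ℕ∞ :=
  ⨆ j ∈ {j : ℕ | z ∈ Mf j}, (j : ℕ∞)

/-- The truncated exponential `Σ_{j=0}^{N} ξ^j/j!`. -/
noncomputable def truncExp (ξ : Module.End 𝕜 M) (N : ℕ) : Module.End 𝕜 M :=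
  ∑ j ∈ Finset.range (N + 1), algebraMap ℚ 𝕜 ((j.factorial : ℚ)⁻¹) • ξ ^ j

/-- The truncated logarithm `Σ_{j=1}^{N} (−1)^{j+1}(g−1)^j/j`. -/
noncomputable def truncLog (φ : Module.End 𝕜 M) (N : ℕ) : Module.End 𝕜 M :=
  ∑ j ∈ Finset.Icc 1 N, algebraMap ℚ 𝕜 (((-1 : ℚ) ^ (j + 1)) / (j : ℚ)) • φ ^ j

/-- The truncated exponential/logarithm correspondence for the pair `(T, G)`. -/
def HasTruncExpLog (Mf : ℕ → Submodule 𝕜 M) (T : Submodule 𝕜 (Module.End 𝕜 M))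
    (G : Subgroup (Module.End 𝕜 M)ˣ) : Prop :=
  (∀ z : M, ∀ ξ ∈ T, ordM Mf (ξ z) < ⊤ → ∀ N : ℕ, ordM Mf (ξ z) ≤ (N : ℕ∞) →
    ∃ g : (Module.End 𝕜 M)ˣ, g ∈ G ∧
      ((g : Module.End 𝕜 M) - truncExp ξ N) ∈ EndS Mf (N + 1)) ∧
  (∀ z : M, ∀ g : (Module.End 𝕜 M)ˣ, g ∈ G →
    ordM Mf (((g : Module.End 𝕜 M) - 1) z) < ⊤ → ∀ N : ℕ,
    ordM Mf (((g : Module.End 𝕜 M) - 1) z) ≤ (N : ℕ∞) →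
    ∃ ξ ∈ T, (ξ - truncLog ((g : Module.End 𝕜 M) - 1) N) ∈ EndS Mf (N + 1))

/-!
Whether `u - 1 - ξ` is smaller than `ξ` at `z`, where `ord (ξ z) = N`, only depends on the actions
of `u` and `ξ` on `M ⧸ Mf (N + 1)`. There `EndS Mf 1` acts by nilpotent endomorphisms, the
truncated exponential and logarithm become the true ones, and `exp ξ - 1` and `log u` agree at `z`
with `ξ` and `u - 1`, because `ξ` and `u - 1` kill the images of `ξ z` and `(u - 1) z`.

It remains to see, for nilpotent endomorphisms, that `exp` and `log` exchange `T + T'` and `G * G'`.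
Let `x ∈ T` and `h ∈ G'`. As `ad x` preserves `T'`, conjugation by `exp x` preserves `G'`, so
`exp (-n x) * (exp x * h) ^ n ∈ G'` for all `n : ℕ`. Its logarithm lies in `T'` and is a polynomial
in `n`, so the linear coefficient `log (exp x * h) - x` lies in `T'`; this gives
`log (exp x * h) ∈ T + T'`. Conversely, the self-map `y ↦ log (exp x * exp y) - x` of `T'` is
surjective by successive approximation, since it is the identity to first order for the filtration.
-/

section EvalNilpotent

open PowerSeries

variable {K R : Type*} [CommRing K] [Ring R] [Algebra K R]

/-- The value `f(a)` of a power series at a nilpotent element `a`, i.e. the finite sum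
`∑ coeff j f • a ^ j`; a junk value if `a` is not nilpotent. -/
noncomputable def evalNilpotent (f : K⟦X⟧) (a : R) : R :=
  Polynomial.aeval a (trunc (nilpotencyClass a) f)

variable {f g : K⟦X⟧} {a : R} {n : ℕ}

theorem X_pow_dvd_sub_trunc (f : K⟦X⟧) (n : ℕ) : (X : K⟦X⟧) ^ n ∣ f - trunc n f :=
  Dvd.intro _ (eq_sub_of_add_eq (eq_X_pow_mul_shift_add_trunc n f).symm)

theorem evalNilpotent_eq_aeval {p : Polynomial K} (ha : a ^ n = 0)
    (hfp : (X : K⟦X⟧) ^ n ∣ f - p) : evalNilpotent f a = Polynomial.aeval a p := by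
  have hdvd : (Polynomial.X : Polynomial K) ^ nilpotencyClass a ∣
      trunc (nilpotencyClass a) f - p := by
    rw [Polynomial.X_pow_dvd_iff]
    intro j hj
    have hjn : j < n := hj.trans_le (Nat.sInf_le ha)
    have hcoeff := X_pow_dvd_iff.mp hfp j hjn
    rw [map_sub, Polynomial.coeff_coe] at hcoeff
    rw [Polynomial.coeff_sub, coeff_trunc, if_pos hj, hcoeff]
  obtain ⟨q, hq⟩ := hdvd
  rw [evalNilpotent, ← sub_eq_zero, ← map_sub, hq, map_mul, map_pow, Polynomial.aeval_X,
    pow_nilpotencyClass ⟨n, ha⟩, zero_mul]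

theorem evalNilpotent_eq_aeval_trunc (ha : a ^ n = 0) (f : K⟦X⟧) :
    evalNilpotent f a = Polynomial.aeval a (trunc n f) :=
  evalNilpotent_eq_aeval ha (X_pow_dvd_sub_trunc f n)

theorem evalNilpotent_eq_sum (ha : a ^ n = 0) (f : K⟦X⟧) :
    evalNilpotent f a = ∑ j ∈ Finset.range n, coeff j f • a ^ j := by
  rw [evalNilpotent_eq_aeval_trunc ha, Polynomial.aeval_def, eval₂_trunc_eq_sum_range]
  simp only [Algebra.smul_def]

theorem pow_evalNilpotent_eq_zero (hf : constantCoeff f = 0) (ha : a ^ n = 0) :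
    evalNilpotent f a ^ n = 0 := by
  have hX : Polynomial.X ∣ trunc n f := by
    rw [Polynomial.X_dvd_iff, coeff_trunc, coeff_zero_eq_constantCoeff_apply, hf, ite_self]
  obtain ⟨q, hq⟩ := pow_dvd_pow_of_dvd hX n
  rw [evalNilpotent_eq_aeval_trunc ha, ← map_pow, hq, map_mul, map_pow, Polynomial.aeval_X, ha,
    zero_mul]

theorem X_pow_dvd_subst_sub_comp_trunc (hg : constantCoeff g = 0) (f : K⟦X⟧) (n : ℕ) :
    (X : K⟦X⟧) ^ n ∣ f.subst g - ((trunc n f).comp (trunc n g) : Polynomial K) := by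
  have hgs : HasSubst g := .of_constantCoeff_zero' hg
  have hf : f.subst g =
      g ^ n * (mk fun i ↦ coeff (i + n) f).subst g + Polynomial.aeval g (trunc n f) := by
    conv_lhs => rw [eq_X_pow_mul_shift_add_trunc n f]
    rw [subst_add hgs, subst_mul hgs, subst_pow hgs, subst_X hgs, subst_coe hgs]
  have hcomp : ((trunc n f).comp (trunc n g) : Polynomial K) =
      Polynomial.aeval (trunc n g : K⟦X⟧) (trunc n f) := by
    rw [Polynomial.comp, ← Polynomial.coeToPowerSeries.ringHom_apply, Polynomial.hom_eval₂,
      Polynomial.aeval_def]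
    congr 1
    ext; simp
  have hsub (p : Polynomial K) (b c : K⟦X⟧) :
      b - c ∣ Polynomial.aeval b p - Polynomial.aeval c p := by
    simpa only [← Polynomial.eval_map_algebraMap] using Polynomial.sub_dvd_eval_sub b c _
  rw [hf, hcomp, add_sub_assoc]
  exact dvd_add ((pow_dvd_pow_of_dvd (X_dvd_iff.mpr hg) n).mul_right _)
    ((X_pow_dvd_sub_trunc g n).trans (hsub _ _ _))

theorem evalNilpotent_subst (hg : constantCoeff g = 0) (ha : IsNilpotent a) (f : K⟦X⟧) :
    evalNilpotent (f.subst g) a = evalNilpotent f (evalNilpotent g a) := by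
  obtain ⟨n, ha⟩ := ha
  rw [evalNilpotent_eq_aeval ha (X_pow_dvd_subst_sub_comp_trunc hg f n), Polynomial.aeval_comp,
    ← evalNilpotent_eq_aeval_trunc ha,
    ← evalNilpotent_eq_aeval_trunc (pow_evalNilpotent_eq_zero hg ha)]

theorem evalNilpotent_smul_of_smul_smul_eq_zero {V : Type*} [AddCommGroup V] [Module K V]
    [Module R V] [IsScalarTower K R V] {v : V} (ha : IsNilpotent a) (hv : a • a • v = 0)
    (f : K⟦X⟧) : evalNilpotent f a • v = constantCoeff f • v + coeff 1 f • a • v := by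
  obtain ⟨n, ha⟩ := ha
  have hpow (j : ℕ) : a ^ (j + 2) • v = 0 := by
    rw [pow_add, mul_smul, pow_two, mul_smul, hv, smul_zero]
  rw [evalNilpotent_eq_sum (pow_eq_zero_of_le (Nat.le_add_right n 2) ha), Finset.sum_smul]
  simp [Finset.sum_range_succ', smul_assoc, hpow, add_comm (constantCoeff f • v)]

end EvalNilpotent

open PowerSeries in
theorem exp_subst_log : (exp ℚ).subst (log ℚ) = 1 + (X : ℚ⟦X⟧) := by
  set e := (exp ℚ).subst (log ℚ) with he
  set u := d⁄dX ℚ (log ℚ) with hu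
  have hu_mul : u * (1 + X) = 1 := by
    ext n
    cases n <;> simp [hu, deriv_log, mul_add, coeff_succ_mul_X, pow_succ]
  have hde : d⁄dX ℚ e = e * u := by
    rw [he, derivative_subst .log, derivative_exp]
  have hdu : d⁄dX ℚ u = -u * u := by
    have h : u + (1 + X) * d⁄dX ℚ u = 0 := by
      simpa using congr(d⁄dX ℚ $hu_mul)
    linear_combination u * h - d⁄dX ℚ u * hu_mul
  have he0 : constantCoeff e = 1 := by
    have h : e = (exp ℚ - 1).subst (log ℚ) + 1 := by
      rw [he, ← coe_substAlgHom .log, map_sub, map_one, sub_add_cancel]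
    have h0 : constantCoeff ((exp ℚ - 1).subst (log ℚ)) = 0 :=
      constantCoeff_subst_eq_zero constantCoeff_log _ (by simp [constantCoeff_exp])
    rw [h, map_add, h0, zero_add, map_one]
  have heu : e * u = 1 := by
    refine derivative.ext ?_ ?_
    · simp only [Derivation.leibniz, hde, hdu, smul_eq_mul, Derivation.map_one_eq_zero]
      ring
    · simp [he0, hu, deriv_log]
  linear_combination (1 + X) * heu - e * hu_mul

section NilpotentExpLog

variable {R : Type*} [Ring R] [Algebra ℚ R] {a x y : R}

theorem exp_eq_evalNilpotent (ha : IsNilpotent a) :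
    IsNilpotent.exp a = evalNilpotent (PowerSeries.exp ℚ) a := by
  obtain ⟨n, ha⟩ := ha
  rw [IsNilpotent.exp_eq_sum ha, evalNilpotent_eq_sum ha]
  simp only [PowerSeries.coeff_exp, one_div, Algebra.algebraMap_self, RingHom.id_apply]

/-- The logarithm `log (1 + a)` of a unipotent element, as a function of its nilpotent part `a`. -/
noncomputable def nilpotentLog (a : R) : R :=
  evalNilpotent (PowerSeries.log ℚ) a

theorem exp_nilpotentLog (ha : IsNilpotent a) : IsNilpotent.exp (nilpotentLog a) = 1 + a := by
  obtain ⟨n, han⟩ := id ha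
  have hlog := PowerSeries.constantCoeff_log (A := ℚ)
  have hsubst : (PowerSeries.X : PowerSeries ℚ) ^ n ∣
      (PowerSeries.exp ℚ).subst (PowerSeries.log ℚ) - (1 + Polynomial.X : Polynomial ℚ) := by
    simp [exp_subst_log]
  rw [nilpotentLog, exp_eq_evalNilpotent ⟨n, pow_evalNilpotent_eq_zero hlog han⟩,
    ← evalNilpotent_subst hlog ha, evalNilpotent_eq_aeval han hsubst]
  simp

theorem exp_nsmul (ha : IsNilpotent a) (n : ℕ) :
    IsNilpotent.exp (n • a) = IsNilpotent.exp a ^ n := by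
  induction n with
  | zero => rw [zero_nsmul, IsNilpotent.exp_zero, pow_zero]
  | succ n ih =>
    rw [succ_nsmul, IsNilpotent.exp_add_of_commute ((Commute.refl a).smul_left n) (ha.smul n) ha,
      ih, pow_succ]

theorem exp_units_conj (u : Rˣ) (ha : IsNilpotent a) :
    IsNilpotent.exp (u * a * ↑u⁻¹) = u * IsNilpotent.exp a * ↑u⁻¹ := by
  simpa only [ConjAct.units_smul_def, ConjAct.ofConjAct_toConjAct] using
    IsNilpotent.exp_smul (ConjAct.toConjAct u) ha

theorem exp_mulLeft (hx : IsNilpotent x) :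
    IsNilpotent.exp (LinearMap.mulLeft ℚ x) = LinearMap.mulLeft ℚ (IsNilpotent.exp x) :=
  (IsNilpotent.map_exp hx (Algebra.lmul ℚ R)).symm

theorem exp_mulRight (hx : IsNilpotent x) :
    IsNilpotent.exp (LinearMap.mulRight ℚ x) = LinearMap.mulRight ℚ (IsNilpotent.exp x) := by
  obtain ⟨k, hk⟩ := hx
  have hk' : LinearMap.mulRight ℚ x ^ k = 0 := by
    rw [LinearMap.pow_mulRight, hk, LinearMap.mulRight_zero_eq_zero]
  ext z
  simp only [IsNilpotent.exp_eq_sum hk, IsNilpotent.exp_eq_sum hk', LinearMap.pow_mulRight,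
    LinearMap.sum_apply, LinearMap.smul_apply, LinearMap.mulRight_apply, Finset.mul_sum,
    mul_smul_comm]

theorem isNilpotent_mulLeft_add_mulRight_neg (hx : IsNilpotent x) :
    IsNilpotent (LinearMap.mulLeft ℚ x + LinearMap.mulRight ℚ (-x)) :=
  (LinearMap.commute_mulLeft_right x (-x)).isNilpotent_add
    ((LinearMap.isNilpotent_mulLeft_iff ℚ x).mpr hx)
    ((LinearMap.isNilpotent_mulRight_iff ℚ (-x)).mpr hx.neg)

theorem exp_mulLeft_add_mulRight_neg_apply (hx : IsNilpotent x) (y : R) :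
    IsNilpotent.exp (LinearMap.mulLeft ℚ x + LinearMap.mulRight ℚ (-x)) y =
      IsNilpotent.exp x * y * IsNilpotent.exp (-x) := by
  rw [IsNilpotent.exp_add_of_commute (LinearMap.commute_mulLeft_right x (-x))
      ((LinearMap.isNilpotent_mulLeft_iff ℚ x).mpr hx)
      ((LinearMap.isNilpotent_mulRight_iff ℚ (-x)).mpr hx.neg),
    exp_mulLeft hx, exp_mulRight hx.neg, Module.End.mul_apply, LinearMap.mulRight_apply,
    LinearMap.mulLeft_apply, mul_assoc]

theorem exp_mul_mul_exp_neg_mem {T : Submodule ℚ R} (hx : IsNilpotent x)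
    (hT : ∀ z ∈ T, x * z - z * x ∈ T) (hy : y ∈ T) :
    IsNilpotent.exp x * y * IsNilpotent.exp (-x) ∈ T := by
  set D := LinearMap.mulLeft ℚ x + LinearMap.mulRight ℚ (-x) with hD
  have hpow (i : ℕ) : (D ^ i) y ∈ T := by
    induction i with
    | zero => exact hy
    | succ i ih =>
      rw [pow_succ', Module.End.mul_apply]
      simpa [hD, sub_eq_add_neg] using hT _ ih
  obtain ⟨k, hk⟩ := isNilpotent_mulLeft_add_mulRight_neg hx
  rw [← exp_mulLeft_add_mulRight_neg_apply hx, IsNilpotent.exp_eq_sum hk, LinearMap.sum_apply]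
  exact T.sum_mem fun i _ ↦ T.smul_mem _ (hpow i)

end NilpotentExpLog

section PolynomialCoefficients

open Polynomial

theorem mem_of_forall_sum_natCast_pow_smul_mem {K V : Type*} [Field K] [CharZero K]
    [AddCommGroup V] [Module K V] {T : Submodule K V} {d : ℕ} {c : Fin d → V}
    (h : ∀ n : ℕ, ∑ i : Fin d, (n : K) ^ (i : ℕ) • c i ∈ T) (i : Fin d) : c i ∈ T := by
  rw [← Submodule.Quotient.mk_eq_zero, ← Module.forall_dual_apply_eq_zero_iff K]
  intro f
  have hinj : Function.Injective fun j : Fin d ↦ ((j : ℕ) : K) :=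
    Nat.cast_injective.comp Fin.val_injective
  refine congr_fun (Matrix.eq_zero_of_forall_index_sum_pow_mul_eq_zero
    (v := fun j ↦ f (T.mkQ (c j))) hinj fun j ↦ ?_) i
  have hj : T.mkQ (∑ i : Fin d, ((j : ℕ) : K) ^ (i : ℕ) • c i) = 0 :=
    (Submodule.Quotient.mk_eq_zero T).mpr (h j)
  simpa only [map_sum, map_smul, smul_eq_mul, map_zero] using congr(f $hj)

variable {K R : Type*} [Ring R]

/-- Evaluation at `n : ℕ` of polynomials over a noncommutative algebra; it is multiplicative
because `n` is central. -/
noncomputable def evalNatCast (K : Type*) [CommRing K] [Algebra K R] (n : ℕ) : R[X] →ₐ[K] R :=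
  eval₂AlgHom (AlgHom.id K R) (n : R) fun a ↦ (Nat.cast_commute n (AlgHom.id K R a)).symm

theorem evalNatCast_apply [CommRing K] [Algebra K R] (n : ℕ) (p : R[X]) :
    evalNatCast K n p = p.eval (n : R) :=
  rfl

theorem coeff_mem_of_forall_evalNatCast_mem [Field K] [CharZero K] [Algebra K R]
    {T : Submodule K R} {p : R[X]} (hp : ∀ n, evalNatCast K n p ∈ T) (i : ℕ) : p.coeff i ∈ T := by
  have hsum (n : ℕ) :
      ∑ j : Fin (p.natDegree + 1), (n : K) ^ (j : ℕ) • p.coeff j = evalNatCast K n p := by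
    rw [evalNatCast_apply, eval_eq_sum_range,
      ← Fin.sum_univ_eq_sum_range fun j ↦ p.coeff j * (n : R) ^ j]
    refine Finset.sum_congr rfl fun j _ ↦ ?_
    rw [Algebra.smul_def, map_pow, map_natCast, ((Nat.cast_commute n _).pow_left j).eq]
  by_cases hi : i < p.natDegree + 1
  · exact mem_of_forall_sum_natCast_pow_smul_mem (fun n ↦ hsum n ▸ hp n) ⟨i, hi⟩
  · rw [coeff_eq_zero_of_natDegree_lt (by omega)]
    exact T.zero_mem

theorem coeff_one_aeval [CommRing K] [Algebra K R] {p : R[X]} (hp : p.coeff 0 = 0) (q : K[X]) :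
    (aeval p q).coeff 1 = q.coeff 1 • p.coeff 1 := by
  obtain ⟨r, rfl⟩ := X_dvd_iff.mpr hp
  have hpow (j : ℕ) : ((X * r) ^ j).coeff 1 = if j = 1 then r.coeff 0 else 0 := by
    rw [(commute_X r).mul_pow, coeff_X_pow_mul']
    rcases j with _ | _ | j <;> simp [coeff_one]
  rw [aeval_eq_sum_range' (Nat.lt_add_of_pos_right two_pos), finsetSum_coeff]
  simp [hpow, coeff_X_mul]

theorem isNilpotent_C_mul_X {a : R} (ha : IsNilpotent a) : IsNilpotent (C a * X) :=
  (commute_X (C a)).symm.isNilpotent_mul_right (ha.map C)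

variable [Algebra ℚ R] {a : R}

theorem evalNatCast_exp_C_mul_X (ha : IsNilpotent a) (n : ℕ) :
    evalNatCast ℚ n (IsNilpotent.exp (C a * X)) = IsNilpotent.exp a ^ n := by
  rw [IsNilpotent.map_exp (isNilpotent_C_mul_X ha), ← exp_nsmul ha, nsmul_eq_mul,
    (Nat.cast_commute n a).eq, evalNatCast_apply, eval_C_mul, eval_X]

theorem coeff_exp_C_mul_X (ha : IsNilpotent a) (i : ℕ) :
    (IsNilpotent.exp (C a * X)).coeff i = (i.factorial : ℚ)⁻¹ • a ^ i := by
  obtain ⟨k, hk⟩ := ha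
  have hpow (j : ℕ) : (C a * X) ^ j = C (a ^ j) * X ^ j := by
    rw [(commute_X (C a)).symm.mul_pow, C_pow]
  have hk' : (C a * X) ^ k = 0 := by rw [hpow, hk, C_0, zero_mul]
  simp only [IsNilpotent.exp_eq_sum hk', finsetSum_coeff, hpow, coeff_smul, coeff_C_mul_X_pow,
    smul_ite, smul_zero, Finset.sum_ite_eq, Finset.mem_range]
  refine ite_eq_left_iff.mpr fun hi ↦ ?_
  rw [pow_eq_zero_of_le (not_lt.mp hi) hk, smul_zero]

end PolynomialCoefficients

section NilpotentFiltration

variable {K R : Type*} [CommRing K] [Ring R] [Algebra K R]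

/-- A descending multiplicative filtration of an algebra which eventually vanishes. -/
structure IsNilpotentFiltration (F : ℕ → Submodule K R) : Prop where
  antitone : Antitone F
  one_mem : 1 ∈ F 0
  mul_mem : ∀ {i j : ℕ} {a b : R}, a ∈ F i → b ∈ F j → a * b ∈ F (i + j)
  exists_eq_bot : ∃ n, F n = ⊥

/-- A self-map of `F 1` which is the identity to first order: its increments agree with those of
the identity up to an error one step deeper in the filtration. -/
structure IsTangentToId (F : ℕ → Submodule K R) (f : R → R) : Prop where
  map_zero_mem : f 0 ∈ F 1
  sub_sub_mem : ∀ {i : ℕ} {a b : R}, a ∈ F 1 → b ∈ F 1 → a - b ∈ F i →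
    f a - f b - (a - b) ∈ F (i + 1)

namespace IsNilpotentFiltration

variable {F : ℕ → Submodule K R} (hF : IsNilpotentFiltration F) {a b : R} {i : ℕ}
include hF

theorem pow_mem (ha : a ∈ F 1) (n : ℕ) : a ^ n ∈ F n := by
  induction n with
  | zero => simpa only [pow_zero] using hF.one_mem
  | succ n ih => simpa only [pow_succ] using hF.mul_mem ih ha

theorem exists_forall_pow_eq_zero : ∃ n, ∀ a ∈ F 1, a ^ n = 0 := by
  obtain ⟨n, hn⟩ := hF.exists_eq_bot
  exact ⟨n, fun a ha ↦ (Submodule.mem_bot K).mp (hn ▸ hF.pow_mem ha n)⟩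

theorem isNilpotent (ha : a ∈ F 1) : IsNilpotent a :=
  hF.exists_forall_pow_eq_zero.imp fun _ hn ↦ hn a ha

theorem mul_sub_one_mem (ha : a - 1 ∈ F 1) (hb : b - 1 ∈ F 1) : a * b - 1 ∈ F 1 := by
  have hexpand : a * b - 1 = (a - 1) * (b - 1) + (a - 1) + (b - 1) := by noncomm_ring
  rw [hexpand]
  exact add_mem (add_mem (hF.antitone one_le_two (hF.mul_mem ha hb)) ha) hb

theorem pow_succ_sub_pow_succ_mem (ha : a ∈ F 1) (hb : b ∈ F 1) (hab : a - b ∈ F i) (n : ℕ) :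
    a ^ (n + 1) - b ^ (n + 1) ∈ F (i + n) := by
  induction n with
  | zero => simpa only [zero_add, pow_one, add_zero] using hab
  | succ n ih =>
    have htelescope : a ^ (n + 2) - b ^ (n + 2) =
        a ^ (n + 1) * (a - b) + (a ^ (n + 1) - b ^ (n + 1)) * b := by
      rw [pow_succ a (n + 1), pow_succ b (n + 1)]
      noncomm_ring
    rw [htelescope]
    refine add_mem ?_ (add_assoc i n 1 ▸ hF.mul_mem ih hb)
    exact add_comm (n + 1) i ▸ hF.mul_mem (hF.pow_mem ha (n + 1)) hab

theorem evalNilpotent_sub_sub_mem {f : PowerSeries K} (hf : PowerSeries.coeff 1 f = 1)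
    (ha : a ∈ F 1) (hb : b ∈ F 1) (hab : a - b ∈ F i) :
    evalNilpotent f a - evalNilpotent f b - (a - b) ∈ F (i + 1) := by
  obtain ⟨n, hn⟩ := hF.exists_forall_pow_eq_zero
  have hpow {c : R} (hc : c ∈ F 1) : c ^ (n + 2) = 0 :=
    pow_eq_zero_of_le (Nat.le_add_right n 2) (hn c hc)
  have hsum : evalNilpotent f a - evalNilpotent f b - (a - b) =
      ∑ j ∈ Finset.range n, PowerSeries.coeff (j + 2) f • (a ^ (j + 2) - b ^ (j + 2)) := by
    simp only [evalNilpotent_eq_sum (hpow ha), evalNilpotent_eq_sum (hpow hb),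
      Finset.sum_range_succ', smul_sub, Finset.sum_sub_distrib, zero_add, pow_one, pow_zero, hf,
      one_smul]
    abel
  rw [hsum]
  refine sum_mem fun j _ ↦ (F _).smul_mem _ (hF.antitone ?_
    (hF.pow_succ_sub_pow_succ_mem ha hb hab (j + 1)))
  omega

theorem isTangentToId_evalNilpotent {f : PowerSeries K} (hf₀ : PowerSeries.constantCoeff f = 0)
    (hf₁ : PowerSeries.coeff 1 f = 1) : IsTangentToId F (evalNilpotent f) where
  map_zero_mem := by
    rw [evalNilpotent_eq_sum (pow_one 0), Finset.sum_range_one,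
      PowerSeries.coeff_zero_eq_constantCoeff_apply, hf₀, zero_smul]
    exact zero_mem _
  sub_sub_mem := hF.evalNilpotent_sub_sub_mem hf₁

theorem isTangentToId_mul_one_add_sub_one (ha : a - 1 ∈ F 1) :
    IsTangentToId F fun b ↦ a * (1 + b) - 1 where
  map_zero_mem := by simpa only [add_zero, mul_one] using ha
  sub_sub_mem {i b c} _ _ hbc := by
    have hexpand : a * (1 + b) - 1 - (a * (1 + c) - 1) - (b - c) = (a - 1) * (b - c) := by
      noncomm_ring
    rw [hexpand, add_comm]
    exact hF.mul_mem ha hbc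

end IsNilpotentFiltration

namespace IsTangentToId

variable {F : ℕ → Submodule K R} {f g : R → R} {a b : R} {i : ℕ}

theorem sub_mem (hf : IsTangentToId F f) (hF : Antitone F) (ha : a ∈ F 1) (hb : b ∈ F 1)
    (hab : a - b ∈ F i) : f a - f b ∈ F i := by
  simpa only [sub_add_cancel] using
    add_mem (hF i.le_succ (hf.sub_sub_mem ha hb hab)) hab

theorem map_mem (hf : IsTangentToId F f) (hF : Antitone F) (ha : a ∈ F 1) : f a ∈ F 1 := by
  have hsub := hf.sub_mem hF ha (zero_mem _) (by rwa [sub_zero] : a - 0 ∈ F 1)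
  simpa only [sub_add_cancel] using add_mem hsub hf.map_zero_mem

theorem comp (hf : IsTangentToId F f) (hg : IsTangentToId F g) (hF : Antitone F) :
    IsTangentToId F (f ∘ g) where
  map_zero_mem := hf.map_mem hF hg.map_zero_mem
  sub_sub_mem {i a b} ha hb hab := by
    have hfg := hf.sub_sub_mem (hg.map_mem hF ha) (hg.map_mem hF hb) (hg.sub_mem hF ha hb hab)
    simpa only [Function.comp_apply, sub_add_sub_cancel] using
      add_mem hfg (hg.sub_sub_mem ha hb hab)

theorem sub_const (hf : IsTangentToId F f) (ha : a ∈ F 1) : IsTangentToId F fun b ↦ f b - a where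
  map_zero_mem := Submodule.sub_mem _ hf.map_zero_mem ha
  sub_sub_mem hb hc hbc := by simpa only [sub_sub_sub_cancel_right] using hf.sub_sub_mem hb hc hbc

theorem exists_mem_map_eq (hf : IsTangentToId F f) (hF : IsNilpotentFiltration F)
    {S : AddSubgroup R} (hS : ∀ a ∈ S, a ∈ F 1) (hfS : ∀ a ∈ S, f a ∈ S) (hb : b ∈ S) :
    ∃ a ∈ S, f a = b := by
  have happrox (n : ℕ) : ∃ a ∈ S, f a - b ∈ F n := by
    induction n with
    | zero =>
      exact ⟨0, zero_mem S, hF.antitone zero_le_one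
        (Submodule.sub_mem _ hf.map_zero_mem (hS b hb))⟩
    | succ n ih =>
      obtain ⟨a, ha, hab⟩ := ih
      have ha' : a - (f a - b) ∈ S := S.sub_mem ha (S.sub_mem (hfS a ha) hb)
      refine ⟨_, ha', ?_⟩
      have hstep := hf.sub_sub_mem (hS _ ha') (hS a ha) (i := n)
        (by simpa only [sub_sub_cancel_left] using neg_mem hab)
      simpa only [sub_sub_cancel_left, sub_neg_eq_add, sub_add_sub_cancel] using hstep
  obtain ⟨n, hn⟩ := hF.exists_eq_bot
  obtain ⟨a, ha, hab⟩ := happrox n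
  rw [hn, Submodule.mem_bot, sub_eq_zero] at hab
  exact ⟨a, ha, hab⟩

end IsTangentToId

end NilpotentFiltration

section ExpLogPair

variable {R : Type*} [Ring R] [Algebra ℚ R]

/-- A subspace `T` and a monoid `G`, unipotent for the filtration `F`, which `exp` and `log`
exchange. -/
structure IsExpLogPair (F : ℕ → Submodule ℚ R) (T : Submodule ℚ R) (G : Submonoid R) : Prop where
  le : T ≤ F 1
  sub_one_mem : ∀ g ∈ G, g - 1 ∈ F 1
  exp_mem : ∀ x ∈ T, IsNilpotent.exp x ∈ G
  log_mem : ∀ g ∈ G, nilpotentLog (g - 1) ∈ T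

open Polynomial in
/-- `log (exp (n x) * exp (n y))` is polynomial in `n` with linear coefficient `x + y`. -/
theorem add_mem_of_forall_nilpotentLog_mem {T : Submodule ℚ R} {x y : R} {k : ℕ}
    (hx : IsNilpotent x) (hy : IsNilpotent y)
    (hk : ∀ n, (IsNilpotent.exp x ^ n * IsNilpotent.exp y ^ n - 1) ^ k = 0)
    (hT : ∀ n, nilpotentLog (IsNilpotent.exp x ^ n * IsNilpotent.exp y ^ n - 1) ∈ T) :
    x + y ∈ T := by
  set p : R[X] := IsNilpotent.exp (C x * X) * IsNilpotent.exp (C y * X) - 1 with hp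
  set q : ℚ[X] := PowerSeries.trunc (k + 2) (PowerSeries.log ℚ) with hq
  have hp_eval (n : ℕ) :
      evalNatCast ℚ n p = IsNilpotent.exp x ^ n * IsNilpotent.exp y ^ n - 1 := by
    rw [hp, map_sub, map_mul, map_one, evalNatCast_exp_C_mul_X hx, evalNatCast_exp_C_mul_X hy]
  have hp₀ : p.coeff 0 = 0 := by
    simp [hp, mul_coeff_zero, coeff_exp_C_mul_X hx, coeff_exp_C_mul_X hy]
  have hp₁ : p.coeff 1 = x + y := by
    simp [hp, mul_coeff_one, coeff_exp_C_mul_X hx, coeff_exp_C_mul_X hy, coeff_one, add_comm]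
  have hq₁ : q.coeff 1 = 1 := by
    simp [hq, PowerSeries.coeff_trunc, PowerSeries.coeff_log]
  have hmem (n : ℕ) : evalNatCast ℚ n (aeval p q) ∈ T := by
    rw [← aeval_algHom_apply, hp_eval, hq, ← evalNilpotent_eq_aeval_trunc
      (pow_eq_zero_of_le (Nat.le_add_right k 2) (hk n))]
    exact hT n
  simpa only [coeff_one_aeval hp₀, hq₁, hp₁, one_smul] using
    coeff_mem_of_forall_evalNatCast_mem hmem 1

namespace IsNilpotentFiltration

variable {F : ℕ → Submodule ℚ R} (hF : IsNilpotentFiltration F) {x y h : R}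
  {T T' : Submodule ℚ R} {G G' : Submonoid R}
include hF

theorem isTangentToId_exp_sub_one : IsTangentToId F fun a ↦ IsNilpotent.exp a - 1 where
  map_zero_mem := by simp
  sub_sub_mem ha hb hab := by
    rw [exp_eq_evalNilpotent (hF.isNilpotent ha), exp_eq_evalNilpotent (hF.isNilpotent hb),
      sub_sub_sub_cancel_right]
    exact hF.evalNilpotent_sub_sub_mem (by simp [PowerSeries.coeff_exp]) ha hb hab

theorem isTangentToId_nilpotentLog : IsTangentToId F (nilpotentLog (R := R)) :=
  hF.isTangentToId_evalNilpotent PowerSeries.constantCoeff_log (by simp [PowerSeries.coeff_log])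

theorem exp_sub_one_mem (hx : x ∈ F 1) : IsNilpotent.exp x - 1 ∈ F 1 :=
  hF.isTangentToId_exp_sub_one.map_mem hF.antitone hx

theorem nilpotentLog_mem (hx : x ∈ F 1) : nilpotentLog x ∈ F 1 :=
  hF.isTangentToId_nilpotentLog.map_mem hF.antitone hx

theorem exp_nilpotentLog_sub_one (hx : x - 1 ∈ F 1) :
    IsNilpotent.exp (nilpotentLog (x - 1)) = x := by
  rw [exp_nilpotentLog (hF.isNilpotent hx), add_sub_cancel]

theorem exp_neg_mul_mul_exp_mem (hG' : IsExpLogPair F T' G') (hx : IsNilpotent x)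
    (hxT' : ∀ z ∈ T', x * z - z * x ∈ T') (hh : h ∈ G') :
    IsNilpotent.exp (-x) * h * IsNilpotent.exp x ∈ G' := by
  have hlog : IsNilpotent.exp (nilpotentLog (h - 1)) = h :=
    hF.exp_nilpotentLog_sub_one (hG'.sub_one_mem h hh)
  have hnil : IsNilpotent (nilpotentLog (h - 1)) :=
    hF.isNilpotent (hG'.le (hG'.log_mem h hh))
  have hconj : IsNilpotent.exp (-x) * nilpotentLog (h - 1) * IsNilpotent.exp x ∈ T' := by
    simpa only [neg_neg] using exp_mul_mul_exp_neg_mem hx.neg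
      (fun z hz ↦ by simpa only [neg_mul, mul_neg, sub_neg_eq_add, neg_add_eq_sub, neg_sub]
        using neg_mem (hxT' z hz)) (hG'.log_mem h hh)
  let u : Rˣ := ⟨IsNilpotent.exp (-x), IsNilpotent.exp x, hx.exp_neg_mul_exp_self,
    hx.exp_mul_exp_neg_self⟩
  have hexp : IsNilpotent.exp (IsNilpotent.exp (-x) * nilpotentLog (h - 1) * IsNilpotent.exp x) =
      IsNilpotent.exp (-x) * h * IsNilpotent.exp x :=
    (exp_units_conj u hnil).trans (by rw [hlog]; rfl)
  exact hexp ▸ hG'.exp_mem _ hconj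

theorem exp_neg_pow_mul_exp_mul_pow_mem (hG' : IsExpLogPair F T' G') (hx : IsNilpotent x)
    (hxT' : ∀ z ∈ T', x * z - z * x ∈ T') (hh : h ∈ G') (n : ℕ) :
    IsNilpotent.exp (-x) ^ n * (IsNilpotent.exp x * h) ^ n ∈ G' := by
  induction n with
  | zero => simp
  | succ n ih =>
    have hconj := G'.mul_mem (hF.exp_neg_mul_mul_exp_mem hG' hx hxT' ih) hh
    simpa only [pow_succ', pow_succ (IsNilpotent.exp x * h), mul_assoc] using hconj

theorem nilpotentLog_exp_mul_sub_mem (hG' : IsExpLogPair F T' G') (hx : x ∈ F 1)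
    (hxT' : ∀ z ∈ T', x * z - z * x ∈ T') (hh : h ∈ G') :
    nilpotentLog (IsNilpotent.exp x * h - 1) - x ∈ T' := by
  have hxn := hF.isNilpotent hx
  have hu : IsNilpotent.exp x * h - 1 ∈ F 1 :=
    hF.mul_sub_one_mem (hF.exp_sub_one_mem hx) (hG'.sub_one_mem h hh)
  have hpow (n : ℕ) := hF.exp_neg_pow_mul_exp_mul_pow_mem hG' hxn hxT' hh n
  obtain ⟨k, hk⟩ := hF.exists_forall_pow_eq_zero
  rw [sub_eq_neg_add]
  apply add_mem_of_forall_nilpotentLog_mem (k := k) hxn.neg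
    (hF.isNilpotent (hF.nilpotentLog_mem hu)) <;> rw [hF.exp_nilpotentLog_sub_one hu]
  · exact fun n ↦ hk _ (hG'.sub_one_mem _ (hpow n))
  · exact fun n ↦ hG'.log_mem _ (hpow n)

theorem isTangentToId_nilpotentLog_exp_mul_exp_sub (hx : x ∈ F 1) :
    IsTangentToId F fun y ↦ nilpotentLog (IsNilpotent.exp x * IsNilpotent.exp y - 1) - x := by
  have hmul := hF.isTangentToId_mul_one_add_sub_one (hF.exp_sub_one_mem hx)
  simpa only [Function.comp_def, add_sub_cancel] using
    (hF.isTangentToId_nilpotentLog.comp (hmul.comp hF.isTangentToId_exp_sub_one hF.antitone)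
      hF.antitone).sub_const hx

theorem exists_exp_add_eq_exp_mul_exp (hG' : IsExpLogPair F T' G') (hx : x ∈ F 1)
    (hxT' : ∀ z ∈ T', x * z - z * x ∈ T') (hy : y ∈ T') :
    ∃ z ∈ T', IsNilpotent.exp (x + y) = IsNilpotent.exp x * IsNilpotent.exp z := by
  obtain ⟨z, hz, hzy⟩ :=
    (hF.isTangentToId_nilpotentLog_exp_mul_exp_sub hx).exists_mem_map_eq hF
      (S := T'.toAddSubgroup) (fun z hz ↦ hG'.le hz)
      (fun z hz ↦ hF.nilpotentLog_exp_mul_sub_mem hG' hx hxT' (hG'.exp_mem z hz)) hy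
  refine ⟨z, hz, ?_⟩
  rw [← hzy, add_sub_cancel, hF.exp_nilpotentLog_sub_one
    (hF.mul_sub_one_mem (hF.exp_sub_one_mem hx) (hF.exp_sub_one_mem (hG'.le hz)))]

theorem exp_mem_mul (hG : IsExpLogPair F T G) (hG' : IsExpLogPair F T' G')
    (hTT' : ∀ x ∈ T, ∀ y ∈ T', x * y - y * x ∈ T') (hxT : x ∈ T ⊔ T') :
    ∃ g ∈ G, ∃ h ∈ G', IsNilpotent.exp x = g * h := by
  obtain ⟨x, hx, y, hy, rfl⟩ := Submodule.mem_sup.mp hxT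
  obtain ⟨z, hz, hxyz⟩ := hF.exists_exp_add_eq_exp_mul_exp hG' (hG.le hx) (hTT' x hx) hy
  exact ⟨_, hG.exp_mem x hx, _, hG'.exp_mem z hz, hxyz⟩

theorem nilpotentLog_mul_sub_one_mem_sup (hG : IsExpLogPair F T G) (hG' : IsExpLogPair F T' G')
    (hTT' : ∀ x ∈ T, ∀ y ∈ T', x * y - y * x ∈ T') {g : R} (hg : g ∈ G) (hh : h ∈ G') :
    nilpotentLog (g * h - 1) ∈ T ⊔ T' := by
  have hlog := hG.log_mem g hg
  have hmem := hF.nilpotentLog_exp_mul_sub_mem hG' (hG.le hlog) (hTT' _ hlog) hh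
  rw [hF.exp_nilpotentLog_sub_one (hG.sub_one_mem g hg)] at hmem
  simpa only [add_sub_cancel] using Submodule.add_mem_sup hlog hmem

end IsNilpotentFiltration

end ExpLogPair

section Filtration

omit [Algebra ℚ 𝕜]

variable {Mf : ℕ → Submodule 𝕜 M} {φ φ' : Module.End 𝕜 M} {z : M} {i j n : ℕ}

theorem lt_ordM_iff (hMf : Antitone Mf) : (n : ℕ∞) < ordM Mf z ↔ z ∈ Mf (n + 1) := by
  simp only [ordM, lt_iSup_iff, Set.mem_ofPred_eq, Nat.cast_lt, exists_prop]
  exact ⟨fun ⟨j, hj, hnj⟩ ↦ hMf hnj hj, fun h ↦ ⟨n + 1, h, n.lt_succ_self⟩⟩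

theorem mem_of_ordM_eq (hMf0 : Mf 0 = ⊤) (hMf : Antitone Mf) (h : ordM Mf z = n) : z ∈ Mf n := by
  cases n with
  | zero => exact hMf0 ▸ Submodule.mem_top
  | succ n => exact (lt_ordM_iff hMf).mp (h ▸ by exact_mod_cast n.lt_succ_self)

theorem EndS_antitone (hMf : Antitone Mf) : Antitone (EndS Mf) :=
  fun _ _ hij _ hφ k x hx ↦ hMf (Nat.add_le_add_left hij k) (hφ k x hx)

theorem one_mem_EndS : 1 ∈ EndS Mf 0 :=
  fun _ _ hx ↦ hx

theorem mul_mem_EndS (hφ : φ ∈ EndS Mf i) (hφ' : φ' ∈ EndS Mf j) : φ * φ' ∈ EndS Mf (i + j) :=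
  fun k x hx ↦ by
    simpa only [Module.End.mul_apply, add_assoc, add_comm j i] using hφ _ _ (hφ' k x hx)

theorem apply_mem_of_mem_EndS (hMf0 : Mf 0 = ⊤) (hφ : φ ∈ EndS Mf n) (z : M) : φ z ∈ Mf n := by
  simpa only [zero_add] using hφ 0 z (hMf0 ▸ Submodule.mem_top)

/-- The algebra of endomorphisms preserving the filtration. -/
def filteredEnd (Mf : ℕ → Submodule 𝕜 M) : Subalgebra 𝕜 (Module.End 𝕜 M) :=
  (EndS Mf 0).toSubalgebra one_mem_EndS fun _ _ ↦ mul_mem_EndS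

theorem EndS_le_filteredEnd (hMf : Antitone Mf) (i : ℕ) :
    EndS Mf i ≤ Subalgebra.toSubmodule (filteredEnd Mf) :=
  EndS_antitone hMf i.zero_le

/-- The action of the filtration-preserving endomorphisms on `M ⧸ Mf n`. -/
def quotientAction (Mf : ℕ → Submodule 𝕜 M) (n : ℕ) :
    filteredEnd Mf →ₐ[𝕜] Module.End 𝕜 (M ⧸ Mf n) where
  toFun φ := (Mf n).mapQ (Mf n) φ (φ.2 n)
  map_one' := by ext; rfl
  map_mul' _ _ := by ext; rfl
  map_zero' := by ext; rfl
  map_add' _ _ := by ext; rfl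
  commutes' _ := by ext; rfl

theorem quotientAction_apply_mk (φ : filteredEnd Mf) (z : M) :
    quotientAction Mf n φ (Submodule.Quotient.mk z) =
      Submodule.Quotient.mk ((φ : Module.End 𝕜 M) z) :=
  rfl

theorem quotientAction_eq_iff {φ φ' : filteredEnd Mf} :
    quotientAction Mf n φ = quotientAction Mf n φ' ↔
      ∀ z, ((φ : Module.End 𝕜 M) - φ') z ∈ Mf n := by
  simp only [← Submodule.Quotient.eq, LinearMap.sub_apply]
  exact ⟨fun h z ↦ LinearMap.congr_fun h (Submodule.Quotient.mk z), fun h ↦ by ext z; exact h z⟩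

theorem quotientAction_eq_of_sub_mem_EndS (hMf0 : Mf 0 = ⊤)
    {φ φ' : filteredEnd Mf} (h : (φ - φ' : Module.End 𝕜 M) ∈ EndS Mf n) :
    quotientAction Mf n φ = quotientAction Mf n φ' :=
  quotientAction_eq_iff.mpr (apply_mem_of_mem_EndS hMf0 h)

theorem quotientAction_eq_zero_or_exists_ordM_le (hMf : Antitone Mf) {N : ℕ} (φ : filteredEnd Mf) :
    quotientAction Mf (N + 1) φ = 0 ∨ ∃ z, ordM Mf ((φ : Module.End 𝕜 M) z) ≤ N := by
  refine or_iff_not_imp_right.mpr fun h ↦ ?_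
  rw [← map_zero (quotientAction Mf (N + 1))]
  refine quotientAction_eq_iff.mpr fun z ↦ (lt_ordM_iff hMf).mp (not_le.mp fun hz ↦ h ⟨z, ?_⟩)
  simpa only [ZeroMemClass.coe_zero, sub_zero] using hz

end Filtration

section QuotientImage

variable {Mf : ℕ → Submodule 𝕜 M} {n : ℕ} [Module ℚ (M ⧸ Mf n)]

/-- The endomorphisms of `M ⧸ Mf n` induced by elements of `T`. -/
def quotientSubmodule (Mf : ℕ → Submodule 𝕜 M) (n : ℕ) [Module ℚ (M ⧸ Mf n)]
    (T : Submodule 𝕜 (Module.End 𝕜 M)) : Submodule ℚ (Module.End 𝕜 (M ⧸ Mf n)) :=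
  ((T.comap (filteredEnd Mf).val.toLinearMap).map
    (quotientAction Mf n).toLinearMap).restrictScalars ℚ

omit [Algebra ℚ 𝕜] in
/-- The endomorphisms of `M ⧸ Mf n` induced by elements of `G`. -/
def quotientSubmonoid (Mf : ℕ → Submodule 𝕜 M) (n : ℕ) (G : Subgroup (Module.End 𝕜 M)ˣ) :
    Submonoid (Module.End 𝕜 (M ⧸ Mf n)) :=
  ((G.toSubmonoid.map (Units.coeHom _)).comap (filteredEnd Mf).val).map (quotientAction Mf n)

theorem mem_quotientSubmodule {T : Submodule 𝕜 (Module.End 𝕜 M)} {x : Module.End 𝕜 (M ⧸ Mf n)} :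
    x ∈ quotientSubmodule Mf n T ↔
      ∃ φ : filteredEnd Mf, (φ : Module.End 𝕜 M) ∈ T ∧ quotientAction Mf n φ = x :=
  Iff.rfl

omit [Algebra ℚ 𝕜] [Module ℚ (M ⧸ Mf n)] in
theorem mem_quotientSubmonoid {G : Subgroup (Module.End 𝕜 M)ˣ} {x : Module.End 𝕜 (M ⧸ Mf n)} :
    x ∈ quotientSubmonoid Mf n G ↔
      ∃ γ : filteredEnd Mf, (∃ g ∈ G, (g : Module.End 𝕜 M) = γ) ∧ quotientAction Mf n γ = x :=
  Iff.rfl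

variable {T T' : Submodule 𝕜 (Module.End 𝕜 M)}

theorem quotientSubmodule_mono (h : T ≤ T') :
    quotientSubmodule Mf n T ≤ quotientSubmodule Mf n T' :=
  Submodule.map_mono (Submodule.comap_mono h)

theorem quotientSubmodule_EndS_eq_bot (hMf0 : Mf 0 = ⊤) :
    quotientSubmodule Mf n (EndS Mf n) = ⊥ := by
  refine (Submodule.eq_bot_iff _).mpr ?_
  rintro _ ⟨φ, hφ : (φ : Module.End 𝕜 M) ∈ EndS Mf n, rfl⟩
  rw [← sub_zero (φ : Module.End 𝕜 M)] at hφ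
  exact (quotientAction_eq_of_sub_mem_EndS hMf0 hφ).trans (map_zero (quotientAction Mf n))

theorem isNilpotentFiltration_quotientSubmodule (hMf0 : Mf 0 = ⊤) (hMf : Antitone Mf) :
    IsNilpotentFiltration (K := ℚ) (R := Module.End 𝕜 (M ⧸ Mf n))
      fun i ↦ quotientSubmodule Mf n (EndS Mf i) where
  antitone _ _ hij := quotientSubmodule_mono (EndS_antitone hMf hij)
  one_mem := ⟨1, one_mem_EndS, map_one (quotientAction Mf n)⟩
  mul_mem := by
    rintro i j _ _ ⟨φ, hφ, rfl⟩ ⟨φ', hφ', rfl⟩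
    exact ⟨φ * φ', mul_mem_EndS hφ hφ', map_mul (quotientAction Mf n) φ φ'⟩
  exists_eq_bot := ⟨n, quotientSubmodule_EndS_eq_bot hMf0⟩

theorem quotientAction_pow_eq_zero (hMf0 : Mf 0 = ⊤) (hMf : Antitone Mf) {φ : filteredEnd Mf}
    (hφ : (φ : Module.End 𝕜 M) ∈ EndS Mf 1) : quotientAction Mf n φ ^ n = 0 := by
  have hpow := (isNilpotentFiltration_quotientSubmodule (n := n) hMf0 hMf).pow_mem ⟨φ, hφ, rfl⟩ n
  rwa [quotientSubmodule_EndS_eq_bot hMf0, Submodule.mem_bot] at hpow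

theorem quotientSubmodule_sup (hMf : Antitone Mf) (hT : T ≤ EndS Mf 1) (hT' : T' ≤ EndS Mf 1) :
    quotientSubmodule Mf n (T ⊔ T') = quotientSubmodule Mf n T ⊔ quotientSubmodule Mf n T' := by
  apply le_antisymm
  · rintro _ ⟨φ, hφ, rfl⟩
    obtain ⟨ξ, hξ, η, hη, hφ⟩ := Submodule.mem_sup.mp hφ
    refine Submodule.mem_sup.mpr ⟨_,
      ⟨⟨ξ, EndS_le_filteredEnd hMf 1 (hT hξ)⟩, hξ, rfl⟩, _,
      ⟨⟨η, EndS_le_filteredEnd hMf 1 (hT' hη)⟩, hη, rfl⟩, ?_⟩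
    exact (map_add _ _ _).symm.trans (congrArg _ (Subtype.ext hφ))
  · exact sup_le (quotientSubmodule_mono le_sup_left) (quotientSubmodule_mono le_sup_right)

theorem quotientSubmodule_commutator_mem (hTT' : ∀ ξ ∈ T, ∀ η ∈ T', ξ * η - η * ξ ∈ T') :
    ∀ x ∈ quotientSubmodule Mf n T, ∀ y ∈ quotientSubmodule Mf n T',
      x * y - y * x ∈ quotientSubmodule Mf n T' := by
  rintro _ ⟨φ, hφ, rfl⟩ _ ⟨φ', hφ', rfl⟩
  exact ⟨φ * φ' - φ' * φ, hTT' _ hφ _ hφ', by simp⟩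

theorem truncExp_mem_filteredEnd {φ : Module.End 𝕜 M} (hφ : φ ∈ filteredEnd Mf) (N : ℕ) :
    truncExp φ N ∈ filteredEnd Mf :=
  sum_mem fun j _ ↦ (filteredEnd Mf).smul_mem (pow_mem hφ j) _

theorem truncLog_mem_filteredEnd {φ : Module.End 𝕜 M} (hφ : φ ∈ filteredEnd Mf) (N : ℕ) :
    truncLog φ N ∈ filteredEnd Mf :=
  sum_mem fun j _ ↦ (filteredEnd Mf).smul_mem (pow_mem hφ j) _

theorem quotientAction_truncExp (φ : filteredEnd Mf) {N : ℕ}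
    (hφ : quotientAction Mf n φ ^ (N + 1) = 0) :
    quotientAction Mf n ⟨truncExp φ N, truncExp_mem_filteredEnd φ.2 N⟩ =
      IsNilpotent.exp (quotientAction Mf n φ) := by
  have hsum : (⟨truncExp φ N, truncExp_mem_filteredEnd φ.2 N⟩ : filteredEnd Mf) =
      ∑ j ∈ Finset.range (N + 1), algebraMap ℚ 𝕜 ((j.factorial : ℚ)⁻¹) • φ ^ j :=
    Subtype.ext (by simp [truncExp])
  simp only [hsum, IsNilpotent.exp_eq_sum hφ, map_sum, map_smul, map_pow, algebraMap_smul]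

theorem quotientAction_truncLog (φ : filteredEnd Mf) {N : ℕ}
    (hφ : quotientAction Mf n φ ^ (N + 1) = 0) :
    quotientAction Mf n ⟨truncLog φ N, truncLog_mem_filteredEnd φ.2 N⟩ =
      nilpotentLog (quotientAction Mf n φ) := by
  have hsum : (⟨truncLog φ N, truncLog_mem_filteredEnd φ.2 N⟩ : filteredEnd Mf) =
      ∑ j ∈ Finset.Icc 1 N, algebraMap ℚ 𝕜 ((-1 : ℚ) ^ (j + 1) / j) • φ ^ j :=
    Subtype.ext (by simp [truncLog])
  rw [nilpotentLog, evalNilpotent_eq_sum hφ, Finset.range_eq_Ico,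
    Finset.sum_eq_sum_Ico_succ_bot N.succ_pos, PowerSeries.coeff_zero_eq_constantCoeff_apply,
    PowerSeries.constantCoeff_log, zero_smul, zero_add, hsum]
  simp only [map_sum, map_smul, map_pow, algebraMap_smul]
  refine Finset.sum_congr rfl fun j hj ↦ ?_
  rw [PowerSeries.coeff_log, if_neg (Nat.one_le_iff_ne_zero.mp (Finset.mem_Icc.mp hj).1),
    Algebra.algebraMap_self_apply]

end QuotientImage

section TruncExpLog

variable {Mf : ℕ → Submodule 𝕜 M} {N : ℕ} [Module ℚ (M ⧸ Mf (N + 1))]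
  {T : Submodule 𝕜 (Module.End 𝕜 M)} {G : Subgroup (Module.End 𝕜 M)ˣ}

theorem HasTruncExpLog.exp_mem_quotientSubmonoid (hTG : HasTruncExpLog Mf T G) (hMf0 : Mf 0 = ⊤)
    (hMf : Antitone Mf) (hG : (G : Set (Module.End 𝕜 M)ˣ) ⊆ GLFil Mf 1) (hT : T ≤ EndS Mf 1)
    {x : Module.End 𝕜 (M ⧸ Mf (N + 1))} (hx : x ∈ quotientSubmodule Mf (N + 1) T) :
    IsNilpotent.exp x ∈ quotientSubmonoid Mf (N + 1) G := by
  obtain ⟨φ, hφ, rfl⟩ := mem_quotientSubmodule.mp hx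
  obtain hzero | ⟨z, hz⟩ := quotientAction_eq_zero_or_exists_ordM_le hMf (N := N) φ
  · rw [hzero, IsNilpotent.exp_zero]
    exact one_mem _
  · obtain ⟨g, hg, hgφ⟩ := hTG.1 z φ hφ (hz.trans_lt (ENat.natCast_lt_top N)) N hz
    refine mem_quotientSubmonoid.mpr ⟨⟨g, (hG hg).1⟩, ⟨g, hg, rfl⟩, ?_⟩
    rw [← quotientAction_truncExp φ (quotientAction_pow_eq_zero hMf0 hMf (hT hφ))]
    exact quotientAction_eq_of_sub_mem_EndS hMf0 hgφ

theorem HasTruncExpLog.nilpotentLog_mem_quotientSubmodule (hTG : HasTruncExpLog Mf T G)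
    (hMf0 : Mf 0 = ⊤) (hMf : Antitone Mf) (hG : (G : Set (Module.End 𝕜 M)ˣ) ⊆ GLFil Mf 1)
    (hT : T ≤ EndS Mf 1) {u : Module.End 𝕜 (M ⧸ Mf (N + 1))}
    (hu : u ∈ quotientSubmonoid Mf (N + 1) G) :
    nilpotentLog (u - 1) ∈ quotientSubmodule Mf (N + 1) T := by
  obtain ⟨γ, ⟨g, hg, hgγ⟩, rfl⟩ := mem_quotientSubmonoid.mp hu
  rw [← map_one (quotientAction Mf (N + 1)), ← map_sub]
  set φ := γ - 1 with hφ
  have hgφ : (g - 1 : Module.End 𝕜 M) = φ := by simp [hφ, hgγ]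
  obtain hzero | ⟨z, hz⟩ := quotientAction_eq_zero_or_exists_ordM_le hMf (N := N) φ
  · rw [hzero, nilpotentLog, evalNilpotent_eq_sum (pow_one 0)]
    simp
  · rw [← hgφ] at hz
    obtain ⟨ξ, hξ, hξφ⟩ := hTG.2 z g hg (hz.trans_lt (ENat.natCast_lt_top N)) N hz
    rw [hgφ] at hξφ
    refine mem_quotientSubmodule.mpr ⟨⟨ξ, EndS_le_filteredEnd hMf 1 (hT hξ)⟩, hξ, ?_⟩
    rw [← quotientAction_truncLog φ (quotientAction_pow_eq_zero hMf0 hMf (hgφ ▸ (hG hg).2.2.1))]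
    exact quotientAction_eq_of_sub_mem_EndS hMf0 hξφ

theorem HasTruncExpLog.isExpLogPair (hTG : HasTruncExpLog Mf T G) (hMf0 : Mf 0 = ⊤)
    (hMf : Antitone Mf) (hG : (G : Set (Module.End 𝕜 M)ˣ) ⊆ GLFil Mf 1) (hT : T ≤ EndS Mf 1) :
    IsExpLogPair (R := Module.End 𝕜 (M ⧸ Mf (N + 1)))
      (fun i ↦ quotientSubmodule Mf (N + 1) (EndS Mf i)) (quotientSubmodule Mf (N + 1) T)
      (quotientSubmonoid Mf (N + 1) G) where
  le := quotientSubmodule_mono hT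
  sub_one_mem u hu := by
    obtain ⟨γ, ⟨g, hg, hgγ⟩, rfl⟩ := mem_quotientSubmonoid.mp hu
    refine mem_quotientSubmodule.mpr ⟨γ - 1, ?_, by rw [map_sub, map_one]⟩
    simpa [hgγ] using (hG hg).2.2.1
  exp_mem _ hx := hTG.exp_mem_quotientSubmonoid hMf0 hMf hG hT hx
  log_mem _ hu := hTG.nilpotentLog_mem_quotientSubmodule hMf0 hMf hG hT hu

end TruncExpLog

section PointwiseLieType

variable {Mf : ℕ → Submodule 𝕜 M} {T : Submodule 𝕜 (Module.End 𝕜 M)}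
  {S : Set (Module.End 𝕜 M)ˣ} {N : ℕ} {z : M}

/-- The pair `(T, S)` is pointwise of Lie type for the index `1`. -/
def IsPointwiseLieType (Mf : ℕ → Submodule 𝕜 M) (T : Submodule 𝕜 (Module.End 𝕜 M))
    (S : Set (Module.End 𝕜 M)ˣ) : Prop :=
  (∀ ξ ∈ T, ∀ z, ∃ u ∈ S, ordM Mf (ξ z) < ⊤ →
    ordM Mf ((u - 1 - ξ : Module.End 𝕜 M) z) > ordM Mf (ξ z)) ∧
  ∀ u ∈ S, ∀ z, ∃ ξ ∈ T, ordM Mf ((u - 1 : Module.End 𝕜 M) z) < ⊤ →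
    ordM Mf ((u - 1 - ξ : Module.End 𝕜 M) z) > ordM Mf ((u - 1 : Module.End 𝕜 M) z)

theorem evalNilpotent_quotientAction_apply_mk [Module ℚ (M ⧸ Mf (N + 1))] (hMf0 : Mf 0 = ⊤)
    (hMf : Antitone Mf) {φ : filteredEnd Mf} (hφ : (φ : Module.End 𝕜 M) ∈ EndS Mf 1)
    (hz : (φ : Module.End 𝕜 M) z ∈ Mf N) (f : PowerSeries ℚ) :
    evalNilpotent f (quotientAction Mf (N + 1) φ) (Submodule.Quotient.mk z) =
      PowerSeries.constantCoeff f • Submodule.Quotient.mk z +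
        PowerSeries.coeff 1 f • Submodule.Quotient.mk ((φ : Module.End 𝕜 M) z) :=
  evalNilpotent_smul_of_smul_smul_eq_zero (a := quotientAction Mf (N + 1) φ)
    (v := (Submodule.Quotient.mk z : M ⧸ Mf (N + 1)))
    ⟨_, quotientAction_pow_eq_zero hMf0 hMf hφ⟩
    ((Submodule.Quotient.mk_eq_zero _).mpr (hφ N _ hz)) f

theorem sub_one_sub_apply_mem_of_eq_exp [Module ℚ (M ⧸ Mf (N + 1))] (hMf0 : Mf 0 = ⊤)
    (hMf : Antitone Mf) {ξ γ : filteredEnd Mf} (hξ : (ξ : Module.End 𝕜 M) ∈ EndS Mf 1)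
    (hγ : quotientAction Mf (N + 1) γ = IsNilpotent.exp (quotientAction Mf (N + 1) ξ))
    (hz : (ξ : Module.End 𝕜 M) z ∈ Mf N) : (γ - 1 - ξ : Module.End 𝕜 M) z ∈ Mf (N + 1) := by
  have hexp := evalNilpotent_quotientAction_apply_mk hMf0 hMf hξ hz (PowerSeries.exp ℚ)
  rw [← exp_eq_evalNilpotent ⟨_, quotientAction_pow_eq_zero hMf0 hMf hξ⟩, ← hγ,
    quotientAction_apply_mk] at hexp
  rw [← Submodule.Quotient.mk_eq_zero]
  simp [hexp, PowerSeries.coeff_exp]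

theorem sub_one_sub_apply_mem_of_eq_nilpotentLog [Module ℚ (M ⧸ Mf (N + 1))]
    (hMf0 : Mf 0 = ⊤) (hMf : Antitone Mf) {ξ γ : filteredEnd Mf}
    (hγ : (γ - 1 : Module.End 𝕜 M) ∈ EndS Mf 1)
    (hξ : quotientAction Mf (N + 1) ξ = nilpotentLog (quotientAction Mf (N + 1) γ - 1))
    (hz : (γ - 1 : Module.End 𝕜 M) z ∈ Mf N) :
    (γ - 1 - ξ : Module.End 𝕜 M) z ∈ Mf (N + 1) := by
  have hlog := evalNilpotent_quotientAction_apply_mk hMf0 hMf (φ := γ - 1) hγ hz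
    (PowerSeries.log ℚ)
  rw [map_sub, map_one, ← nilpotentLog, ← hξ, quotientAction_apply_mk] at hlog
  rw [← Submodule.Quotient.mk_eq_zero]
  simp [hlog, PowerSeries.coeff_log]

theorem isPointwiseLieType_of_exp_of_log [∀ n, Module ℚ (M ⧸ Mf n)] (hMf0 : Mf 0 = ⊤)
    (hMf : Antitone Mf) (hT : T ≤ EndS Mf 1)
    (hS : ∀ u ∈ S, (u - 1 : Module.End 𝕜 M) ∈ EndS Mf 1)
    (hexp : ∀ N, ∀ x ∈ quotientSubmodule Mf (N + 1) T, ∃ u ∈ S, ∃ γ : filteredEnd Mf,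
      (u : Module.End 𝕜 M) = γ ∧ quotientAction Mf (N + 1) γ = IsNilpotent.exp x)
    (hlog : ∀ N, ∀ u ∈ S, ∀ γ : filteredEnd Mf, (u : Module.End 𝕜 M) = γ →
      nilpotentLog (quotientAction Mf (N + 1) γ - 1) ∈ quotientSubmodule Mf (N + 1) T) :
    IsPointwiseLieType Mf T S := by
  constructor
  · intro ξ hξ z
    have hξ' := EndS_le_filteredEnd hMf 1 (hT hξ)
    cases hord : ordM Mf (ξ z) with
    | top =>
      obtain ⟨u, hu, -⟩ := hexp 0 0 (zero_mem _)
      exact ⟨u, hu, fun h ↦ absurd h (lt_irrefl _)⟩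
    | coe N =>
      obtain ⟨u, hu, γ, huγ, hγ⟩ := hexp N _ (mem_quotientSubmodule.mpr ⟨⟨ξ, hξ'⟩, hξ, rfl⟩)
      refine ⟨u, hu, fun _ ↦ (lt_ordM_iff hMf).mpr ?_⟩
      rw [huγ]
      exact sub_one_sub_apply_mem_of_eq_exp hMf0 hMf (hT hξ) hγ (mem_of_ordM_eq hMf0 hMf hord)
  · intro u hu z
    cases hord : ordM Mf ((u - 1 : Module.End 𝕜 M) z) with
    | top => exact ⟨0, zero_mem _, fun h ↦ absurd h (lt_irrefl _)⟩
    | coe N =>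
      have hu' : (u : Module.End 𝕜 M) ∈ filteredEnd Mf := by
        simpa using add_mem (EndS_le_filteredEnd hMf 1 (hS u hu)) (one_mem (filteredEnd Mf))
      obtain ⟨ξ, hξ, hξu⟩ := mem_quotientSubmodule.mp (hlog N u hu ⟨u, hu'⟩ rfl)
      exact ⟨ξ, hξ, fun _ ↦ (lt_ordM_iff hMf).mpr <| sub_one_sub_apply_mem_of_eq_nilpotentLog
        hMf0 hMf (hS u hu) hξu (mem_of_ordM_eq hMf0 hMf hord)⟩

end PointwiseLieType

omit [Algebra ℚ 𝕜] in
theorem units_mul_sub_one_mem_EndS {Mf : ℕ → Submodule 𝕜 M} {i : ℕ} {g h : (Module.End 𝕜 M)ˣ}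
    (hg : g ∈ GLFil Mf i) (hh : h ∈ GLFil Mf i) :
    ((g * h : (Module.End 𝕜 M)ˣ) - 1 : Module.End 𝕜 M) ∈ EndS Mf i := by
  have hsplit : ((g * h : (Module.End 𝕜 M)ˣ) - 1 : Module.End 𝕜 M) = g * (h - 1) + (g - 1) := by
    rw [Units.val_mul]
    noncomm_ring
  rw [hsplit]
  exact add_mem (fun j x hx ↦ hg.1 _ _ (hh.2.2.1 j x hx)) hg.2.2.1

theorem statement8_general (Mf : ℕ → Submodule 𝕜 M) (hMf0 : Mf 0 = ⊤) (hMf : Antitone Mf)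
    (G H : Subgroup (Module.End 𝕜 M)ˣ)
    (hG : (G : Set (Module.End 𝕜 M)ˣ) ⊆ GLFil Mf 1)
    (hH : (H : Set (Module.End 𝕜 M)ˣ) ⊆ GLFil Mf 1)
    (TG TH : Submodule 𝕜 (Module.End 𝕜 M))
    (hTG : TG ≤ EndS Mf 1) (hTH : TH ≤ EndS Mf 1)
    (hexpG : HasTruncExpLog Mf TG G) (hexpH : HasTruncExpLog Mf TH H)
    (hcomm : ∀ ξ ∈ TG, ∀ η ∈ TH, ξ * η - η * ξ ∈ TH) :
    IsPointwiseLieType Mf (TG ⊔ TH) {u | ∃ g ∈ G, ∃ h ∈ H, u = g * h} := by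
  let _ (n : ℕ) : Module ℚ (M ⧸ Mf n) := Module.compHom _ (algebraMap ℚ 𝕜)
  have hF (N : ℕ) := isNilpotentFiltration_quotientSubmodule (n := N + 1) hMf0 hMf
  have hGpair (N : ℕ) := hexpG.isExpLogPair (N := N) hMf0 hMf hG hTG
  have hHpair (N : ℕ) := hexpH.isExpLogPair (N := N) hMf0 hMf hH hTH
  have hcomm' (N : ℕ) := quotientSubmodule_commutator_mem (Mf := Mf) (n := N + 1) hcomm
  refine isPointwiseLieType_of_exp_of_log hMf0 hMf (sup_le hTG hTH) ?_ ?_ ?_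
  · rintro _ ⟨g, hg, h, hh, rfl⟩
    exact units_mul_sub_one_mem_EndS (hG hg) (hH hh)
  · intro N x hx
    rw [quotientSubmodule_sup hMf hTG hTH] at hx
    obtain ⟨_, ⟨γ, ⟨g, hg, hgγ⟩, rfl⟩, _, ⟨δ, ⟨h, hh, hhδ⟩, rfl⟩, hx⟩ :=
      (hF N).exp_mem_mul (hGpair N) (hHpair N) (hcomm' N) hx
    exact ⟨g * h, ⟨g, hg, h, hh, rfl⟩, γ * δ, congr($hgγ * $hhδ), (map_mul _ _ _).trans hx.symm⟩
  · rintro N _ ⟨g, hg, h, hh, rfl⟩ γ hγ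
    rw [quotientSubmodule_sup hMf hTG hTH]
    have hγ' : γ = ⟨g, (hG hg).1⟩ * ⟨h, (hH hh).1⟩ := Subtype.ext hγ.symm
    rw [hγ', map_mul]
    exact (hF N).nilpotentLog_mul_sub_one_mem_sup (hGpair N) (hHpair N) (hcomm' N)
      (mem_quotientSubmonoid.mpr ⟨_, ⟨g, hg, rfl⟩, rfl⟩)
      (mem_quotientSubmonoid.mpr ⟨_, ⟨h, hh, rfl⟩, rfl⟩)

/-- over a ring containing ℚ, if the pairs `(T_G, G^{(1)})`, `(T_H, H^{(1)})`
admit truncated exponential/logarithm correspondences, the subgroup generated by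
`G^{(1)} ∪ H^{(1)}` equals `G^{(1)}·H^{(1)}`, and `[T_G, T_H] ⊆ T_H`, then
`(T_G + T_H, G^{(1)}·H^{(1)})` is pointwise of Lie type for the index 1. -/
theorem statement8 (Mf : ℕ → Submodule 𝕜 M) (hMf0 : Mf 0 = ⊤) (hMf : Antitone Mf)
    (G H : Subgroup (Module.End 𝕜 M)ˣ)
    (hG : (G : Set (Module.End 𝕜 M)ˣ) ⊆ GLFil Mf 1)
    (hH : (H : Set (Module.End 𝕜 M)ˣ) ⊆ GLFil Mf 1)
    (TG TH : Submodule 𝕜 (Module.End 𝕜 M))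
    (hTG : TG ≤ EndS Mf 1) (hTH : TH ≤ EndS Mf 1)
    (hexpG : HasTruncExpLog Mf TG G) (hexpH : HasTruncExpLog Mf TH H)
    (hgen : ((G ⊔ H : Subgroup (Module.End 𝕜 M)ˣ) : Set (Module.End 𝕜 M)ˣ)
      = {u | ∃ g ∈ G, ∃ h ∈ H, u = g * h})
    (hcomm : ∀ ξ ∈ TG, ∀ η ∈ TH, ξ * η - η * ξ ∈ TH) :
    (∀ ξ ∈ (TG ⊔ TH : Submodule 𝕜 (Module.End 𝕜 M)), ∀ z : M,
      ∃ u : (Module.End 𝕜 M)ˣ, (∃ g ∈ G, ∃ h ∈ H, u = g * h) ∧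
        (ordM Mf (ξ z) < ⊤ →
          ordM Mf (((u : Module.End 𝕜 M) - 1 - ξ) z) > ordM Mf (ξ z))) ∧
    (∀ u : (Module.End 𝕜 M)ˣ, (∃ g ∈ G, ∃ h ∈ H, u = g * h) → ∀ z : M,
      ∃ ξ ∈ (TG ⊔ TH : Submodule 𝕜 (Module.End 𝕜 M)),
        (ordM Mf (((u : Module.End 𝕜 M) - 1) z) < ⊤ →
          ordM Mf (((u : Module.End 𝕜 M) - 1 - ξ) z)
            > ordM Mf (((u : Module.End 𝕜 M) - 1) z))) :=
  statement8_general Mf hMf0 hMf G H hG hH TG TH hTG hTH hexpG hexpH hcomm
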